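/- (Pyramid trick.) Let ℓ ≥ 1, let the machines be indexed 1,…,2ℓ, and let the jobs consist of ℓ pairs, where for each i ∈ {1,…,ℓ} the two jobs of pair i are each eligible exactly on the machines {i, i+1, …, 2ℓ+1−i}. If σ assigns each of the 2ℓ jobs to one of its eligible machines in such a way that every machine receives exactly one job, then for every i ∈ {1,…,ℓ}, machine i and machine 2ℓ+1−i each receive exactly one job of pair i. -/

import Mathlib

/-!
The proof is by strong induction on the pair `i`, working from the outside of the pyramid inwards.
The two end machines of the interval of pair `i` are ineligible for every later pair, while the
jobs of the earlier pairs are all used up on machines further out. Hence both end machines receive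
jobs of pair `i`, and these two jobs are different because the two machines are.
-/

/-- Machine `i` (0-indexed) among `2ℓ` machines; corresponds to machine `i+1` in the
1-indexed formulation. -/
def mlow (l : ℕ) (i : Fin l) : Fin (2 * l) := ⟨(i : ℕ), by have := i.isLt; omega⟩

/-- Machine `2ℓ-1-i` (0-indexed); corresponds to machine `2ℓ+1-(i+1)` in the 1-indexed
formulation. -/
def mhigh (l : ℕ) (i : Fin l) : Fin (2 * l) :=
  ⟨2 * l - 1 - (i : ℕ), by have := i.isLt; omega⟩

/-- pyramid trick: with `2ℓ` machines and `ℓ` pairs of jobs, the two jobs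
of pair `i` being eligible exactly on machines `{i,…,2ℓ+1-i}` (1-indexed), if an
assignment sends every job to an eligible machine so that every machine receives exactly
one job, then for each `i` machine `i` and machine `2ℓ+1-i` each receive exactly one job
of pair `i`. -/
theorem statement13 (l : ℕ) (hl : 1 ≤ l)
    (σ : Fin l × Fin 2 → Fin (2 * l))
    (helig : ∀ pr : Fin l × Fin 2,
      (pr.1 : ℕ) ≤ (σ pr : ℕ) ∧ (σ pr : ℕ) ≤ 2 * l - 1 - (pr.1 : ℕ))
    (hone : ∀ i : Fin (2 * l), ∃! pr : Fin l × Fin 2, σ pr = i) :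
    ∀ i : Fin l,
      (σ (i, 0) = mlow l i ∧ σ (i, 1) = mhigh l i) ∨
      (σ (i, 1) = mlow l i ∧ σ (i, 0) = mhigh l i) := by
  intro i
  induction i using WellFoundedLT.induction with
  | ind i ih =>
  -- Both ends of the interval of pair `i` lie outside the intervals of all later pairs, and by
  -- the induction hypothesis the jobs of each earlier pair sit at the ends of their own interval.
  have outer : ∀ m : Fin (2 * l), ((m : ℕ) = i ∨ (m : ℕ) = 2 * l - 1 - i) →
      ∃ a : Fin 2, σ (i, a) = m := by
    intro m hm
    obtain ⟨⟨j, a⟩, hja, -⟩ := hone m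
    have he := helig (j, a)
    have hi := i.isLt
    have hj := j.isLt
    rw [hja] at he
    dsimp only at he
    rcases (show j ≤ i by rw [Fin.le_def]; omega).lt_or_eq with hlt | rfl
    · have hlt' : (j : ℕ) < i := hlt
      have hend : (m : ℕ) = j ∨ (m : ℕ) = 2 * l - 1 - j := by
        rw [← hja]
        rcases ih j hlt with ⟨h0, h1⟩ | ⟨h1, h0⟩ <;> fin_cases a <;>
          simp [h0, h1, mlow, mhigh]
      omega
    · exact ⟨a, hja⟩
  obtain ⟨a, ha⟩ := outer (mlow l i) (Or.inl rfl)
  obtain ⟨b, hb⟩ := outer (mhigh l i) (Or.inr rfl)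
  have hne : mlow l i ≠ mhigh l i := by
    intro h
    have h' : (i : ℕ) = 2 * l - 1 - i := congrArg Fin.val h
    have hi := i.isLt
    omega
  fin_cases a <;> fin_cases b
  · exact absurd (ha.symm.trans hb) hne
  · exact Or.inl ⟨ha, hb⟩
  · exact Or.inr ⟨ha, hb⟩
  · exact absurd (ha.symm.trans hb) hne
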